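/- Let n = 2m + 1 be odd and let τ_{2m+1} : ℂCl(2m+1) → End_ℂ(⋀W_m) be the spinor representation given by τ_{2m+1}(u + v̄ + λ e_{2m+1}) x = √2 ε(u) x − √2 ι(v̄) x + i λ γ(x). Regard Spin(2m) as a subgroup of the unit group of ℂCl(2m+1) via ℝ^{2m} ⊂ ℝ^{2m+1} ⊂ ℂ^{2m+1} (spanning e₁,…,e_{2m}). Then the subspaces 𝕊^±_{2m} = ⋀^{±}W_m are Spin(2m)-invariant, each is an irreducible Spin(2m)-representation, the two are non-equivalent, and the only Spin(2m)-invariant subspaces of ⋀W_m are 0, 𝕊^+_{2m}, 𝕊^−_{2m} and ⋀W_m; i.e. the restriction of τ_{2m+1} to Spin(2m) decomposes with multiplicity one as σ^+_{2m} ⊕ σ^−_{2m}. -/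

import Mathlib

set_option synthInstance.maxHeartbeats 1000000
set_option maxHeartbeats 1000000

noncomputable section

open Complex

/-- The quadratic form `Q(x) = -(x₁² + ⋯ + x_n²)` on `ℂⁿ`. -/
def Qc (n : ℕ) : QuadraticForm ℂ (Fin n → ℂ) :=
  QuadraticMap.weightedSumSquares ℂ (fun _ : Fin n => (-1 : ℂ))

/-- The isotropic vector `f_j = (e_{2j-1} + i e_{2j})/√2` (0-indexed: coords `2j`, `2j+1`). -/
def fvec (n j : ℕ) : Fin n → ℂ := fun i =>
  if (i : ℕ) = 2 * j then ((Real.sqrt 2 : ℂ))⁻¹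
  else if (i : ℕ) = 2 * j + 1 then Complex.I * ((Real.sqrt 2 : ℂ))⁻¹
  else 0

/-- The isotropic vector `f̄_j = -(e_{2j-1} - i e_{2j})/√2`. -/
def fbarvec (n j : ℕ) : Fin n → ℂ := fun i =>
  if (i : ℕ) = 2 * j then -((Real.sqrt 2 : ℂ))⁻¹
  else if (i : ℕ) = 2 * j + 1 then Complex.I * ((Real.sqrt 2 : ℂ))⁻¹
  else 0

/-- The standard basis vector `e` with a `1` in (0-indexed) coordinate `j`. -/
def evec (n j : ℕ) : Fin n → ℂ := fun i => if (i : ℕ) = j then 1 else 0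

/-- The maximal isotropic subspace `W = span(f₁, …, f_m)` of `ℂⁿ`. -/
def Wsub (n m : ℕ) : Submodule ℂ (Fin n → ℂ) :=
  Submodule.span ℂ (Set.range fun j : Fin m => fvec n j)

/-- `W̄ = span(f̄₁, …, f̄_m)`. -/
def Wbarsub (n m : ℕ) : Submodule ℂ (Fin n → ℂ) :=
  Submodule.span ℂ (Set.range fun j : Fin m => fbarvec n j)

/-- The Dirac spinor space `𝕊 = ⋀ W`. -/
abbrev Spinor (n m : ℕ) := ExteriorAlgebra ℂ (Wsub n m)

/-- The bilinear extension `⟨v, ·⟩ = Σ_i v_i (·)_i` of the standard inner product,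
as a linear functional. -/
def pairingLin (n : ℕ) (v : Fin n → ℂ) : (Fin n → ℂ) →ₗ[ℂ] ℂ :=
  ∑ i, v i • (LinearMap.proj i : (Fin n → ℂ) →ₗ[ℂ] ℂ)

/-- Exterior multiplication `ε(u)` by `u ∈ W` on `⋀ W`. -/
def extMul (n m : ℕ) (u : Wsub n m) : Module.End ℂ (Spinor n m) :=
  LinearMap.mulLeft ℂ (ExteriorAlgebra.ι ℂ u)

/-- Interior multiplication (contraction) `ι(v̄)` on `⋀ W` by `v̄ ∈ ℂⁿ`, with respect to the
pairing `⟨v̄, u⟩`; it is the unique degree `-1` antiderivation with `ι(v̄) u = ⟨v̄, u⟩` on `W`. -/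
def intMul (n m : ℕ) (v : Fin n → ℂ) : Module.End ℂ (Spinor n m) :=
  CliffordAlgebra.contractLeft (Q := (0 : QuadraticForm ℂ (Wsub n m)))
    ((pairingLin n v).comp (Wsub n m).subtype)

/-- The parity operator `γ`, acting by `(-1)^k` on `⋀^k W`. -/
def parity (n m : ℕ) : Module.End ℂ (Spinor n m) :=
  (CliffordAlgebra.involute (Q := (0 : QuadraticForm ℂ (Wsub n m)))).toLinearMap

/-- `γ` as a linear equivalence (it is an involution). -/
def parityEquiv (n m : ℕ) : Spinor n m ≃ₗ[ℂ] Spinor n m :=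
  LinearEquiv.ofInvolutive (parity n m) (fun x => CliffordAlgebra.involute_involute x)

/-- The even part `𝕊⁺ = ⋀^{even} W`. -/
def SpinorEven (n m : ℕ) : Submodule ℂ (Spinor n m) :=
  CliffordAlgebra.evenOdd (0 : QuadraticForm ℂ (Wsub n m)) 0

/-- The odd part `𝕊⁻ = ⋀^{odd} W`. -/
def SpinorOdd (n m : ℕ) : Submodule ℂ (Spinor n m) :=
  CliffordAlgebra.evenOdd (0 : QuadraticForm ℂ (Wsub n m)) 1

/-- The property of being an element of the spin group `Spin(k)` inside `ℂCl(n)`: a product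
of an even number of unit vectors of `ℝ^k ⊂ ℝ^n ⊂ ℂ^n` (vectors with real coordinates,
supported in the first `k` coordinates, of norm one). -/
def IsSpinElt (n k : ℕ) (g : CliffordAlgebra (Qc n)) : Prop :=
  ∃ (l : ℕ) (xs : Fin (2 * l) → (Fin n → ℂ)),
    (∀ i : Fin (2 * l),
        (∀ j : Fin n, (xs i j).im = 0) ∧
        (∀ j : Fin n, k ≤ (j : ℕ) → xs i j = 0) ∧
        (∑ j : Fin n, xs i j ^ 2) = 1) ∧
    g = (List.ofFn fun i : Fin (2 * l) => CliffordAlgebra.ι (Qc n) (xs i)).prod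

section Abs
open CliffordAlgebra
variable {K M : Type*} [Field K] [AddCommGroup M] [Module K M] {m : ℕ}

theorem abs_vac (f : Fin m → M) (d : Fin m → Module.Dual K M)
    (hd : ∀ j k, d j (f k) = if j = k then 1 else 0) (s : Finset (Fin m)) :
    ∃ P : Module.End K (ExteriorAlgebra K M), P 1 = 1 ∧
      (∀ k ∈ s, ∀ y, P (ExteriorAlgebra.ι K (f k) * y) = 0) ∧
      (∀ k ∉ s, ∀ y, P (ExteriorAlgebra.ι K (f k) * y) = ExteriorAlgebra.ι K (f k) * P y) ∧
      (∀ x, (∀ j, contractLeft (Q := (0 : QuadraticForm K M)) (d j) x = 0) → P x = x) := by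
  induction s using Finset.induction_on with
  | empty => exact ⟨LinearMap.id, by simp⟩
  | insert j s hj ih =>
    obtain ⟨P, h1, h2, h3, h4⟩ := ih
    refine ⟨(contractLeft (Q := (0 : QuadraticForm K M)) (d j)) ∘ₗ
      (LinearMap.mulLeft K (ExteriorAlgebra.ι K (f j))) ∘ₗ P, ?_, ?_, ?_, ?_⟩
    · simp only [LinearMap.comp_apply, LinearMap.mulLeft_apply, h1]
      erw [contractLeft_ι_mul]
      rw [hd, contractLeft_one]; simp
    · intro k hk y
      simp only [LinearMap.comp_apply, LinearMap.mulLeft_apply]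
      rcases Finset.mem_insert.1 hk with rfl | hk
      · rw [h3 _ hj, ← mul_assoc, ExteriorAlgebra.ι_sq_zero]; simp
      · rw [h2 _ hk]; simp
    · intro k hk y
      simp only [Finset.mem_insert, not_or] at hk
      simp only [LinearMap.comp_apply, LinearMap.mulLeft_apply]
      rw [h3 _ hk.2, ← mul_assoc,
        eq_neg_of_add_eq_zero_left (ExteriorAlgebra.ι_add_mul_swap (R := K) (f j) (f k)),
        neg_mul, map_neg, mul_assoc]
      erw [contractLeft_ι_mul]
      rw [hd, if_neg (Ne.symm hk.1)]; simp
    · intro x hx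
      simp only [LinearMap.comp_apply, LinearMap.mulLeft_apply]
      rw [h4 x hx]
      erw [contractLeft_ι_mul]
      rw [hd, hx]; simp

theorem abs_lin (f : Fin m → M) (hf : Submodule.span K (Set.range f) = ⊤)
    (A B : Module.End K (ExteriorAlgebra K M)) (y z : ExteriorAlgebra K M)
    (h : ∀ k, A (ExteriorAlgebra.ι K (f k) * y) = B (ExteriorAlgebra.ι K (f k) * z)) (w : M) :
    A (ExteriorAlgebra.ι K w * y) = B (ExteriorAlgebra.ι K w * z) := by
  have hw : w ∈ Submodule.span K (Set.range f) := hf ▸ Submodule.mem_top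
  induction hw using Submodule.span_induction with
  | mem x hx => obtain ⟨k, rfl⟩ := hx; exact h k
  | zero => simp
  | add x y _ _ hx hy => simp [add_mul, hx, hy]
  | smul c x _ hx => simp [hx]

theorem abs_scalar (f : Fin m → M) (d : Fin m → Module.Dual K M)
    (hf : Submodule.span K (Set.range f) = ⊤)
    (hd : ∀ j k, d j (f k) = if j = k then 1 else 0) (x : ExteriorAlgebra K M)
    (hx : ∀ j, contractLeft (Q := (0 : QuadraticForm K M)) (d j) x = 0) :
    ∃ r : K, x = algebraMap K _ r := by
  obtain ⟨P, h1, h2, -, h4⟩ := abs_vac f d hd Finset.univ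
  have key : ∀ y, ∃ r : K, P y = algebraMap K _ r := by
    intro y
    induction y using CliffordAlgebra.left_induction with
    | algebraMap r => exact ⟨r, by rw [Algebra.algebraMap_eq_smul_one, map_smul, h1]⟩
    | add y z hy hz =>
      obtain ⟨r, hr⟩ := hy
      obtain ⟨t, ht⟩ := hz
      exact ⟨r + t, by rw [map_add, map_add, hr, ht]⟩
    | ι_mul y w _ =>
      refine ⟨0, ?_⟩
      have := abs_lin f hf P 0 y y (fun k => by rw [h2 k (Finset.mem_univ k)]; simp) w
      rw [map_zero]; simpa using this
  rw [← h4 x hx]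
  exact key x

theorem abs_irred (f : Fin m → M) (d : Fin m → Module.Dual K M)
    (hf : Submodule.span K (Set.range f) = ⊤)
    (hd : ∀ j k, d j (f k) = if j = k then 1 else 0)
    (U : Submodule K (ExteriorAlgebra K M)) (hU : U ≠ ⊥)
    (ha : ∀ j, ∀ x ∈ U, ExteriorAlgebra.ι K (f j) * x ∈ U)
    (hb : ∀ j, ∀ x ∈ U, contractLeft (Q := (0 : QuadraticForm K M)) (d j) x ∈ U) : U = ⊤ := by
  have hvac : ∀ s : Finset (Fin m), ∃ x ∈ U, x ≠ 0 ∧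
      ∀ j ∈ s, contractLeft (Q := (0 : QuadraticForm K M)) (d j) x = 0 := by
    intro s
    induction s using Finset.induction_on with
    | empty => obtain ⟨x, hx, h0⟩ := U.ne_bot_iff.1 hU; exact ⟨x, hx, h0, by simp⟩
    | insert j s hj ih =>
      obtain ⟨x, hx, h0, h⟩ := ih
      by_cases hc : contractLeft (Q := (0 : QuadraticForm K M)) (d j) x = 0
      · refine ⟨x, hx, h0, fun k hk => ?_⟩
        rcases Finset.mem_insert.1 hk with rfl | hk
        exacts [hc, h k hk]
      · refine ⟨_, hb j x hx, hc, fun k hk => ?_⟩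
        rcases Finset.mem_insert.1 hk with rfl | hk
        · exact contractLeft_contractLeft _ _
        · rw [contractLeft_comm, h k hk]; simp
  obtain ⟨x, hx, h0, h⟩ := hvac Finset.univ
  obtain ⟨r, rfl⟩ := abs_scalar f d hf hd x (fun j => h j (Finset.mem_univ j))
  have hr : r ≠ 0 := by rintro rfl; simp at h0
  have h1 : ∀ t : K, algebraMap K (ExteriorAlgebra K M) t ∈ U := by
    intro t
    have := U.smul_mem (t * r⁻¹) hx
    rwa [Algebra.algebraMap_eq_smul_one, smul_smul, mul_assoc, inv_mul_cancel₀ hr, mul_one,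
      ← Algebra.algebraMap_eq_smul_one] at this
  rw [eq_top_iff]
  rintro y -
  induction y using CliffordAlgebra.left_induction with
  | algebraMap r => exact h1 r
  | add y z hy hz => exact U.add_mem hy hz
  | ι_mul y w hy =>
    have hw : w ∈ Submodule.span K (Set.range f) := hf ▸ Submodule.mem_top
    have : ExteriorAlgebra.ι K w * y ∈ U := by
      induction hw using Submodule.span_induction with
      | mem x hx => obtain ⟨k, rfl⟩ := hx; exact ha k y hy
      | zero => simp
      | add x y _ _ hx hy => rw [map_add, add_mul]; exact U.add_mem hx hy
      | smul c x _ hx => rw [map_smul, smul_mul_assoc]; exact U.smul_mem c hx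
    exact this

theorem abs_gamma (f : Fin m → M) (d : Fin m → Module.Dual K M)
    (hf : Submodule.span K (Set.range f) = ⊤)
    (hd : ∀ j k, d j (f k) = if j = k then 1 else 0)
    (A : Subalgebra K (Module.End K (ExteriorAlgebra K M)))
    (hA : ∀ j, LinearMap.mulLeft K (ExteriorAlgebra.ι K (f j)) *
      contractLeft (Q := (0 : QuadraticForm K M)) (d j) ∈ A) :
    (involute (Q := (0 : QuadraticForm K M))).toLinearMap ∈ A := by
  have key : ∀ s : Finset (Fin m), ∃ P ∈ A, P 1 = 1 ∧
      (∀ k ∈ s, ∀ y, P (ExteriorAlgebra.ι K (f k) * y) = -(ExteriorAlgebra.ι K (f k) * P y)) ∧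
      (∀ k ∉ s, ∀ y, P (ExteriorAlgebra.ι K (f k) * y) = ExteriorAlgebra.ι K (f k) * P y) := by
    intro s
    induction s using Finset.induction_on with
    | empty => exact ⟨1, A.one_mem, by simp⟩
    | insert j s hj ih =>
      obtain ⟨P, hP, h1, h2, h3⟩ := ih
      have hsq : ExteriorAlgebra.ι K (f j) * ExteriorAlgebra.ι K (f j) = 0 :=
        ExteriorAlgebra.ι_sq_zero _
      have hcj : ∀ y, contractLeft (Q := (0 : QuadraticForm K M)) (d j)
          (ExteriorAlgebra.ι K (f j) * y) = y - ExteriorAlgebra.ι K (f j) *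
            contractLeft (Q := (0 : QuadraticForm K M)) (d j) y := by
        intro y
        have := contractLeft_ι_mul (Q := (0 : QuadraticForm K M)) (d := d j) (f j) y
        rw [hd, if_pos rfl, one_smul] at this
        exact this
      have hck : ∀ k, j ≠ k → ∀ y, contractLeft (Q := (0 : QuadraticForm K M)) (d j)
          (ExteriorAlgebra.ι K (f k) * y) = - (ExteriorAlgebra.ι K (f k) *
            contractLeft (Q := (0 : QuadraticForm K M)) (d j) y) := by
        intro k hk y
        have := contractLeft_ι_mul (Q := (0 : QuadraticForm K M)) (d := d j) (f k) y
        rw [hd, if_neg hk, zero_smul, zero_sub] at this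
        exact this
      have hcom : ∀ k, j ≠ k → ∀ y, ExteriorAlgebra.ι K (f j) *
          contractLeft (Q := (0 : QuadraticForm K M)) (d j) (ExteriorAlgebra.ι K (f k) * y) =
          ExteriorAlgebra.ι K (f k) * (ExteriorAlgebra.ι K (f j) *
            contractLeft (Q := (0 : QuadraticForm K M)) (d j) y) := by
        intro k hk y
        rw [hck k hk, mul_neg, ← mul_assoc, ← mul_assoc,
          eq_neg_of_add_eq_zero_left (ExteriorAlgebra.ι_add_mul_swap (R := K) (f j) (f k)),
          neg_mul, neg_neg]
      refine ⟨(1 - 2 • (LinearMap.mulLeft K (ExteriorAlgebra.ι K (f j)) *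
        contractLeft (Q := (0 : QuadraticForm K M)) (d j))) * P,
        A.mul_mem (A.sub_mem A.one_mem (A.nsmul_mem (hA j) 2)) hP, ?_, ?_, ?_⟩
      · simp [h1, contractLeft_one]
      · intro k hk y
        simp only [Module.End.mul_apply, LinearMap.sub_apply, Module.End.one_apply,
          LinearMap.smul_apply, LinearMap.mulLeft_apply]
        by_cases hkj : j = k
        · subst hkj
          rw [h3 _ hj, hcj, mul_sub, mul_sub, mul_smul_comm, ← mul_assoc, hsq]
          simp only [zero_mul, smul_zero, sub_zero, two_smul]; abel
        · have hk' : k ∈ s := by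
            rcases Finset.mem_insert.1 hk with rfl | hk
            exacts [absurd rfl hkj, hk]
          rw [h2 _ hk', map_neg, mul_neg, hcom k hkj, mul_sub, mul_smul_comm]
          simp only [smul_neg]; abel
      · intro k hk y
        simp only [Finset.mem_insert, not_or] at hk
        simp only [Module.End.mul_apply, LinearMap.sub_apply, Module.End.one_apply,
          LinearMap.smul_apply, LinearMap.mulLeft_apply]
        rw [h3 _ hk.2, hcom k (Ne.symm hk.1), mul_sub, mul_smul_comm]
  obtain ⟨P, hP, h1, h2, -⟩ := key Finset.univ
  convert hP using 1
  symm
  refine LinearMap.ext fun y => ?_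
  induction y using CliffordAlgebra.left_induction with
  | algebraMap r =>
    rw [Algebra.algebraMap_eq_smul_one, map_smul, map_smul, h1]
    simp
  | add y z hy hz => rw [map_add, map_add, hy, hz]
  | ι_mul y w hy =>
    have := abs_lin f hf P (-1) y (P y) (fun k => by rw [h2 k (Finset.mem_univ k)]; rfl) w
    have h5 : involute (Q := (0 : QuadraticForm K M)) (CliffordAlgebra.ι 0 w * y) =
        - (CliffordAlgebra.ι 0 w * involute y) := by
      rw [map_mul, involute_ι, neg_mul]
    refine Eq.trans this (Eq.trans ?_ h5.symm)
    rw [hy]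
    rfl
end Abs

theorem c_self_neg {V : Type*} [AddCommGroup V] [Module ℂ V] {x : V} (h : x = -x) : x = 0 := by
  have h1 : (2 : ℂ) • x = 0 := by rw [two_smul]; nth_rewrite 1 [h]; simp
  exact (smul_eq_zero.1 h1).resolve_left two_ne_zero

theorem rep_comm {A V : Type*} [Ring A] [Algebra ℂ A] [AddCommGroup V] [Module ℂ V]
    (τ : A →ₐ[ℂ] Module.End ℂ V) {a b : A} (h : a * b = b * a) (x : V) :
    τ a (τ b x) = τ b (τ a x) := by
  rw [← Module.End.mul_apply, ← Module.End.mul_apply, ← map_mul, ← map_mul, h]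

theorem rep_anti {A V : Type*} [Ring A] [Algebra ℂ A] [AddCommGroup V] [Module ℂ V]
    (τ : A →ₐ[ℂ] Module.End ℂ V) {a b : A} (h : a * b = -(b * a)) (x : V) :
    τ a (τ b x) = - τ b (τ a x) := by
  rw [← Module.End.mul_apply, ← Module.End.mul_apply, ← map_mul, ← map_mul, h, map_neg]
  rfl

theorem rep_sq {A V : Type*} [Ring A] [Algebra ℂ A] [AddCommGroup V] [Module ℂ V]
    (τ : A →ₐ[ℂ] Module.End ℂ V) {a : A} (h : a * a = algebraMap ℂ A (-1)) (x : V) :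
    τ a (τ a x) = - x := by
  rw [← Module.End.mul_apply, ← map_mul, h, AlgHom.commutes, Module.algebraMap_end_apply]
  simp

theorem c_half {V : Type*} [AddCommGroup V] [Module ℂ V] (x y : V) :
    x = (1 / 2 : ℂ) • (x + y) + (1 / 2 : ℂ) • (x - y) := by
  module

theorem even_iff (n m : ℕ) (x : Spinor n m) : x ∈ SpinorEven n m ↔ parity n m x = x := by
  refine ⟨fun h => CliffordAlgebra.involute_eq_of_mem_even h, fun h => ?_⟩
  have hx : x ∈ SpinorEven n m ⊔ SpinorOdd n m := by
    have := (CliffordAlgebra.evenOdd_isCompl (Q := (0 : QuadraticForm ℂ (Wsub n m)))).sup_eq_top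
    exact this ▸ Submodule.mem_top
  obtain ⟨y, hy, z, hz, rfl⟩ := Submodule.mem_sup.1 hx
  have h1 : parity n m y = y := CliffordAlgebra.involute_eq_of_mem_even hy
  have h2 : parity n m z = -z := CliffordAlgebra.involute_eq_of_mem_odd hz
  rw [map_add, h1, h2] at h
  have : z = 0 := by
    have h3 : -z = z := add_left_cancel h
    exact c_self_neg h3.symm
  rw [this, add_zero]; exact hy

theorem odd_iff (n m : ℕ) (x : Spinor n m) : x ∈ SpinorOdd n m ↔ parity n m x = -x := by
  refine ⟨fun h => CliffordAlgebra.involute_eq_of_mem_odd h, fun h => ?_⟩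
  have hx : x ∈ SpinorEven n m ⊔ SpinorOdd n m := by
    have := (CliffordAlgebra.evenOdd_isCompl (Q := (0 : QuadraticForm ℂ (Wsub n m)))).sup_eq_top
    exact this ▸ Submodule.mem_top
  obtain ⟨y, hy, z, hz, rfl⟩ := Submodule.mem_sup.1 hx
  have h1 : parity n m y = y := CliffordAlgebra.involute_eq_of_mem_even hy
  have h2 : parity n m z = -z := CliffordAlgebra.involute_eq_of_mem_odd hz
  rw [map_add, h1, h2, neg_add] at h
  have : y = 0 := by
    have h3 : y = -y := add_right_cancel h
    exact c_self_neg h3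
  rw [this, zero_add]; exact hz

theorem sqrt2_sq : (Real.sqrt 2 : ℂ) * (Real.sqrt 2 : ℂ) = 2 := by
  rw [← Complex.ofReal_mul, Real.mul_self_sqrt (by norm_num)]; norm_num

theorem sqrt2_ne : (Real.sqrt 2 : ℂ) ≠ 0 := by
  intro h
  have := sqrt2_sq
  rw [h] at this; norm_num at this

theorem fvec_eq (n j : ℕ) : fvec n j = ((Real.sqrt 2 : ℂ))⁻¹ • evec n (2 * j) +
    (Complex.I * ((Real.sqrt 2 : ℂ))⁻¹) • evec n (2 * j + 1) := by
  funext i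
  simp only [fvec, evec, Pi.add_apply, Pi.smul_apply, smul_eq_mul]
  split_ifs <;> first | omega | simp

theorem fbarvec_eq (n j : ℕ) : fbarvec n j = (-((Real.sqrt 2 : ℂ))⁻¹) • evec n (2 * j) +
    (Complex.I * ((Real.sqrt 2 : ℂ))⁻¹) • evec n (2 * j + 1) := by
  funext i
  simp only [fbarvec, evec, Pi.add_apply, Pi.smul_apply, smul_eq_mul]
  split_ifs <;> first | omega | simp

theorem pairing_evec (n : ℕ) (v : Fin n → ℂ) (p : ℕ) (hp : p < n) :
    pairingLin n v (evec n p) = v ⟨p, hp⟩ := by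
  simp only [pairingLin, evec, LinearMap.sum_apply, LinearMap.smul_apply, LinearMap.proj_apply,
    smul_eq_mul, mul_ite, mul_one, mul_zero]
  rw [Finset.sum_eq_single ⟨p, hp⟩]
  · simp
  · intro i _ hi
    rw [if_neg]
    intro h; exact hi (Fin.ext h)
  · simp

theorem pairing_fbar_f (m : ℕ) (j k : Fin m) :
    pairingLin (2 * m + 1) (fbarvec (2 * m + 1) j) (fvec (2 * m + 1) k) =
      if j = k then -1 else 0 := by
  have hk := k.2
  rw [fvec_eq, map_add, map_smul, map_smul, pairing_evec _ _ _ (by omega),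
    pairing_evec _ _ _ (by omega)]
  simp only [fbarvec, smul_eq_mul]
  have hs : ((Real.sqrt 2 : ℂ))⁻¹ * ((Real.sqrt 2 : ℂ))⁻¹ = 1 / 2 := by
    rw [← mul_inv, sqrt2_sq]; norm_num
  by_cases h : j = k
  · subst h
    have h1 : ¬ (2 * (j : ℕ) + 1 = 2 * j) := by omega
    simp only [if_true, if_neg h1]
    linear_combination (Complex.I * Complex.I - 1) * hs + (1 / 2) * Complex.I_mul_I
  · have hv : (j : ℕ) ≠ k := fun h' => h (Fin.ext h')
    rw [if_neg (by omega), if_neg (by omega), if_neg (by omega), if_neg (by omega), if_neg h]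
    simp

theorem Qc_ortho (n : ℕ) (v : Fin n → ℂ) (p : ℕ) (hp : p < n) (hv : v ⟨p, hp⟩ = 0) :
    (Qc n).IsOrtho v (evec n p) := by
  rw [QuadraticMap.isOrtho_def]
  simp only [Qc, QuadraticMap.weightedSumSquares_apply, ← Finset.sum_add_distrib]
  refine Finset.sum_congr rfl fun i _ => ?_
  simp only [Pi.add_apply, evec]
  split_ifs with h
  · have : i = ⟨p, hp⟩ := Fin.ext h
    rw [this, hv]; simp
  · simp

theorem evec_sq_sum (n p : ℕ) (hp : p < n) : (∑ j : Fin n, evec n p j ^ 2) = 1 := by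
  rw [Finset.sum_eq_single ⟨p, hp⟩]
  · simp [evec]
  · intro i _ hi
    rw [evec, if_neg]
    · simp
    · intro h; exact hi (Fin.ext h)
  · simp

theorem Qc_evec (n p : ℕ) (hp : p < n) : Qc n (evec n p) = -1 := by
  have := evec_sq_sum n p hp
  simp only [Qc, QuadraticMap.weightedSumSquares_apply, neg_smul, one_smul,
    Finset.sum_neg_distrib, ← pow_two, this]

theorem spin_pair (n k p q : ℕ) (hk : k ≤ n) (hp : p < k) (hq : q < k) :
    IsSpinElt n k (CliffordAlgebra.ι (Qc n) (evec n p) * CliffordAlgebra.ι (Qc n) (evec n q)) := by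
  have key : ∀ p < k, (∀ j : Fin n, (evec n p j).im = 0) ∧
        (∀ j : Fin n, k ≤ (j : ℕ) → evec n p j = 0) ∧
        (∑ j : Fin n, evec n p j ^ 2) = 1 := by
    intro p hp
    refine ⟨fun j => ?_, fun j hj => ?_, evec_sq_sum n p (by omega)⟩
    · rw [evec]; split_ifs <;> simp
    · rw [evec, if_neg (by omega)]
  refine ⟨1, ![evec n p, evec n q], ?_, ?_⟩
  · intro i
    fin_cases i
    · exact key p hp
    · exact key q hq
  · simp [List.ofFn_succ]

theorem list_comm {A : Type*} [Ring A] (E : A) (L : List A) (h : ∀ a ∈ L, a * E = -(E * a)) :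
    L.prod * E = (-1) ^ L.length * (E * L.prod) := by
  induction L with
  | nil => simp
  | cons a L ih =>
    rw [List.prod_cons, mul_assoc, ih (fun b hb => h b (List.mem_cons_of_mem _ hb)),
      List.length_cons, pow_succ]
    have ha := h a List.mem_cons_self
    rcases neg_one_pow_eq_or A L.length with h1 | h1 <;> rw [h1]
    · rw [one_mul, ← mul_assoc, ha]; noncomm_ring
    · rw [neg_one_mul, mul_neg, ← mul_assoc, ha]; noncomm_ring

theorem spin_comm (m : ℕ) (g : CliffordAlgebra (Qc (2 * m + 1)))
    (hg : IsSpinElt (2 * m + 1) (2 * m) g) :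
    g * CliffordAlgebra.ι _ (evec (2 * m + 1) (2 * m)) =
      CliffordAlgebra.ι _ (evec (2 * m + 1) (2 * m)) * g := by
  obtain ⟨l, xs, h, rfl⟩ := hg
  rw [list_comm, List.length_ofFn, pow_mul]
  · simp
  · intro a ha
    obtain ⟨i, rfl⟩ := (List.mem_ofFn' _ _).1 ha
    exact CliffordAlgebra.ι_mul_ι_comm_of_isOrtho
      (Qc_ortho _ _ _ (by omega) ((h i).2.1 _ (le_refl _)))

set_option maxHeartbeats 10000000 in
/-- Let `n = 2m + 1` be odd and `τ : ℂCl(2m+1) → End(⋀W_m)` the spinor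
representation `τ(u + v̄ + λ e_{2m+1}) x = √2 ε(u) x − √2 ι(v̄) x + i λ γ(x)`. Regard
`Spin(2m)` inside `ℂCl(2m+1)` via `ℝ^{2m} ⊂ ℝ^{2m+1} ⊂ ℂ^{2m+1}`. Then `𝕊^± = ⋀^± W_m`
are `Spin(2m)`-invariant, each is irreducible, the two are non-equivalent, and the only
`Spin(2m)`-invariant subspaces of `⋀W_m` are `0`, `𝕊⁺`, `𝕊⁻` and `⋀W_m`; i.e. the
restriction of `τ` to `Spin(2m)` decomposes with multiplicity one as `σ⁺ ⊕ σ⁻`. -/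
theorem spin_rep_odd_restriction_spin_even (m : ℕ) (hm : 1 ≤ m)
    (τ : CliffordAlgebra (Qc (2 * m + 1)) →ₐ[ℂ] Module.End ℂ (Spinor (2 * m + 1) m))
    (hτ : ∀ (u : Wsub (2 * m + 1) m) (v : Wbarsub (2 * m + 1) m) (lam : ℂ)
        (x : Spinor (2 * m + 1) m),
        τ (CliffordAlgebra.ι (Qc (2 * m + 1))
            ((u : Fin (2 * m + 1) → ℂ) + (v : Fin (2 * m + 1) → ℂ) +
              lam • evec (2 * m + 1) (2 * m))) x =
          (Real.sqrt 2 : ℂ) • (ExteriorAlgebra.ι ℂ u * x) -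
            (Real.sqrt 2 : ℂ) • intMul (2 * m + 1) m (v : Fin (2 * m + 1) → ℂ) x +
            (Complex.I * lam) • parity (2 * m + 1) m x) :
    -- `𝕊⁺` and `𝕊⁻` are invariant under `Spin(2m)`
    (∀ g, IsSpinElt (2 * m + 1) (2 * m) g →
        ∀ x ∈ SpinorEven (2 * m + 1) m, τ g x ∈ SpinorEven (2 * m + 1) m) ∧
    (∀ g, IsSpinElt (2 * m + 1) (2 * m) g →
        ∀ x ∈ SpinorOdd (2 * m + 1) m, τ g x ∈ SpinorOdd (2 * m + 1) m) ∧
    -- each is an irreducible `Spin(2m)`-representation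
    (∀ U : Submodule ℂ (Spinor (2 * m + 1) m), U ≤ SpinorEven (2 * m + 1) m →
        (∀ g, IsSpinElt (2 * m + 1) (2 * m) g → ∀ x ∈ U, τ g x ∈ U) →
        U = ⊥ ∨ U = SpinorEven (2 * m + 1) m) ∧
    (∀ U : Submodule ℂ (Spinor (2 * m + 1) m), U ≤ SpinorOdd (2 * m + 1) m →
        (∀ g, IsSpinElt (2 * m + 1) (2 * m) g → ∀ x ∈ U, τ g x ∈ U) →
        U = ⊥ ∨ U = SpinorOdd (2 * m + 1) m) ∧
    -- the two are non-equivalent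
    (¬ ∃ g : SpinorEven (2 * m + 1) m ≃ₗ[ℂ] SpinorOdd (2 * m + 1) m,
        ∀ a, IsSpinElt (2 * m + 1) (2 * m) a →
          ∀ x y : SpinorEven (2 * m + 1) m,
            (y : Spinor (2 * m + 1) m) = τ a (x : Spinor (2 * m + 1) m) →
              (g y : Spinor (2 * m + 1) m) = τ a (g x : Spinor (2 * m + 1) m)) ∧
    -- the only `Spin(2m)`-invariant subspaces are `⊥`, `𝕊⁺`, `𝕊⁻`, `⊤`
    (∀ U : Submodule ℂ (Spinor (2 * m + 1) m),
        (∀ g, IsSpinElt (2 * m + 1) (2 * m) g → ∀ x ∈ U, τ g x ∈ U) →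
        U = ⊥ ∨ U = SpinorEven (2 * m + 1) m ∨ U = SpinorOdd (2 * m + 1) m ∨ U = ⊤) := by
  classical
  set E0 : Submodule ℂ (Fin (2 * m + 1) → ℂ) :=
    Submodule.span ℂ {v | ∃ p < 2 * m, v = evec (2 * m + 1) p} with hE0
  let fW : Fin m → Wsub (2 * m + 1) m := fun j =>
    ⟨fvec (2 * m + 1) j, Submodule.subset_span ⟨j, rfl⟩⟩
  let dW : Fin m → Module.Dual ℂ (Wsub (2 * m + 1) m) := fun j =>
    -((pairingLin (2 * m + 1) (fbarvec (2 * m + 1) j)).comp (Wsub (2 * m + 1) m).subtype)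
  have hf : Submodule.span ℂ (Set.range fW) = ⊤ := by
    have : Set.range fW = (Subtype.val) ⁻¹' (Set.range fun j : Fin m => fvec (2 * m + 1) j) := by
      ext x
      constructor
      · rintro ⟨j, rfl⟩; exact ⟨j, rfl⟩
      · rintro ⟨j, hj⟩; exact ⟨j, Subtype.ext hj⟩
    rw [this]
    exact Submodule.span_span_coe_preimage
  have hd : ∀ j k, dW j (fW k) = if j = k then 1 else 0 := by
    intro j k
    change -(pairingLin (2 * m + 1) (fbarvec (2 * m + 1) j) (fvec (2 * m + 1) k)) = _
    rw [pairing_fbar_f]; split_ifs <;> simp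
  have hint0 : ∀ x, intMul (2 * m + 1) m 0 x = 0 := by
    intro x
    have : (pairingLin (2 * m + 1) 0).comp (Wsub (2 * m + 1) m).subtype = 0 := by
      simp [pairingLin]
    rw [intMul, this]; simp
  have hTf : ∀ (j : Fin m) x, τ (CliffordAlgebra.ι _ (fvec (2 * m + 1) j)) x =
      (Real.sqrt 2 : ℂ) • (ExteriorAlgebra.ι ℂ (fW j) * x) := by
    intro j x
    have := hτ (fW j) 0 0 x
    simpa [hint0, fW] using this
  have hTb : ∀ (j : Fin m) x, τ (CliffordAlgebra.ι _ (fbarvec (2 * m + 1) j)) x =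
      (Real.sqrt 2 : ℂ) • (CliffordAlgebra.contractLeft
        (Q := (0 : QuadraticForm ℂ (Wsub (2 * m + 1) m))) (dW j) x) := by
    intro j x
    have := hτ 0 ⟨fbarvec (2 * m + 1) j, Submodule.subset_span ⟨j, rfl⟩⟩ 0 x
    simpa [intMul, dW] using this
  have hTg : ∀ x, τ (CliffordAlgebra.ι _ (evec (2 * m + 1) (2 * m))) x =
      Complex.I • parity (2 * m + 1) m x := by
    intro x
    have := hτ 0 0 1 x
    simpa [hint0] using this
  have hgpar : ∀ x, parity (2 * m + 1) m x =
      (-Complex.I) • τ (CliffordAlgebra.ι _ (evec (2 * m + 1) (2 * m))) x := by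
    intro x
    rw [hTg, smul_smul]; simp
  have hcomm : ∀ g, IsSpinElt (2 * m + 1) (2 * m) g → ∀ x,
      parity (2 * m + 1) m (τ g x) = τ g (parity (2 * m + 1) m x) := by
    intro g hg x
    rw [hgpar, hgpar, map_smul, rep_comm τ (spin_comm m g hg)]
  set T0 := τ (CliffordAlgebra.ι _ (evec (2 * m + 1) 0)) with hT0
  have hanti : ∀ x, parity (2 * m + 1) m (T0 x) = - T0 (parity (2 * m + 1) m x) := by
    intro x
    have ho := CliffordAlgebra.ι_mul_ι_comm_of_isOrtho
      (Qc_ortho (2 * m + 1) (evec (2 * m + 1) 0) (2 * m) (by omega)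
        (by rw [evec, if_neg]; change 2 * m ≠ 0; omega))
    rw [hgpar, hgpar, map_smul, rep_anti τ ho, smul_neg, neg_neg]
  have hT0sq : ∀ x, T0 (T0 x) = -x := by
    intro x
    refine rep_sq τ ?_ x
    rw [CliffordAlgebra.ι_sq_scalar, Qc_evec _ _ (by omega)]
  set 𝒜 : Subalgebra ℂ (Module.End ℂ (Spinor (2 * m + 1) m)) :=
    Algebra.adjoin ℂ {B | ∃ g, IsSpinElt (2 * m + 1) (2 * m) g ∧ B = τ g} with h𝒜
  have hVV : ∀ v ∈ E0, ∀ w ∈ E0,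
      τ (CliffordAlgebra.ι _ v) * τ (CliffordAlgebra.ι _ w) ∈ 𝒜 := by
    intro v hv w hw
    induction hv using Submodule.span_induction with
    | mem v hv =>
      obtain ⟨p, hp, rfl⟩ := hv
      induction hw using Submodule.span_induction with
      | mem w hw =>
        obtain ⟨q, hq, rfl⟩ := hw
        rw [← map_mul]
        exact Algebra.subset_adjoin ⟨_, spin_pair _ _ _ _ (by omega) hp hq, rfl⟩
      | zero => simp
      | add x y _ _ hx hy => rw [map_add, map_add, mul_add]; exact 𝒜.add_mem hx hy
      | smul c x _ hx =>
        rw [map_smul, map_smul, mul_smul_comm]; exact 𝒜.smul_mem hx c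
    | zero => simp
    | add x y _ _ hx hy => rw [map_add, map_add, add_mul]; exact 𝒜.add_mem hx hy
    | smul c x _ hx =>
      rw [map_smul, map_smul, smul_mul_assoc]; exact 𝒜.smul_mem hx c
  have heE : ∀ p < 2 * m, evec (2 * m + 1) p ∈ E0 := fun p hp =>
    Submodule.subset_span ⟨p, hp, rfl⟩
  have hfE : ∀ j : Fin m, fvec (2 * m + 1) j ∈ E0 := by
    intro j
    have := j.2
    rw [fvec_eq]
    exact E0.add_mem (E0.smul_mem _ (heE _ (by omega))) (E0.smul_mem _ (heE _ (by omega)))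
  have hbE : ∀ j : Fin m, fbarvec (2 * m + 1) j ∈ E0 := by
    intro j
    have := j.2
    rw [fbarvec_eq]
    exact E0.add_mem (E0.smul_mem _ (heE _ (by omega))) (E0.smul_mem _ (heE _ (by omega)))
  have hgam : parity (2 * m + 1) m ∈ 𝒜 := by
    have h0 := abs_gamma fW dW hf hd 𝒜
    refine h0 ?_
    intro j
    have h1 := 𝒜.smul_mem (hVV _ (hfE j) _ (hbE j)) (1 / 2 : ℂ)
    convert h1 using 1
    refine LinearMap.ext fun x => ?_
    simp only [Module.End.mul_apply, LinearMap.smul_apply, LinearMap.mulLeft_apply, hTf, hTb,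
      mul_smul_comm, smul_smul]
    rw [sqrt2_sq]; norm_num
  have hinv : ∀ U : Submodule ℂ (Spinor (2 * m + 1) m),
      (∀ g, IsSpinElt (2 * m + 1) (2 * m) g → ∀ x ∈ U, τ g x ∈ U) →
      ∀ B ∈ 𝒜, ∀ x ∈ U, B x ∈ U := by
    intro U hU B hB
    induction hB using Algebra.adjoin_induction with
    | mem B hB => obtain ⟨g, hg, rfl⟩ := hB; exact hU g hg
    | algebraMap r => intro x hx; rw [Module.algebraMap_end_apply]; exact U.smul_mem r hx
    | add A B _ _ hA hB => intro x hx; exact U.add_mem (hA x hx) (hB x hx)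
    | mul A B _ _ hA hB => intro x hx; exact hA _ (hB x hx)
  have hcore : ∀ U : Submodule ℂ (Spinor (2 * m + 1) m),
      (∀ g, IsSpinElt (2 * m + 1) (2 * m) g → ∀ x ∈ U, τ g x ∈ U) → U ≠ ⊥ →
      U ⊔ U.map T0 = ⊤ := by
    intro U hU hne
    have hA := hinv U hU
    have hcl : ∀ v ∈ E0, ∀ x ∈ U ⊔ U.map T0, τ (CliffordAlgebra.ι _ v) x ∈ U ⊔ U.map T0 := by
      intro v hv x hx
      obtain ⟨y, hy, z, hz, rfl⟩ := Submodule.mem_sup.1 hx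
      obtain ⟨z, hz, rfl⟩ := hz
      have h0 := heE 0 (by omega)
      rw [map_add]
      refine Submodule.add_mem _ (Submodule.mem_sup_right ?_) (Submodule.mem_sup_left ?_)
      · refine ⟨-(T0 (τ (CliffordAlgebra.ι _ v) y)), U.neg_mem (hA _ (hVV _ h0 _ hv) y hy), ?_⟩
        rw [map_neg, hT0sq, neg_neg]
      · exact hA _ (hVV _ hv _ h0) z hz
    refine abs_irred fW dW hf hd _ ?_ ?_ ?_
    · intro h
      exact hne (le_bot_iff.1 (h ▸ le_sup_left))
    · intro j x hx
      have := Submodule.smul_mem _ ((Real.sqrt 2 : ℂ))⁻¹ (hcl _ (hfE j) x hx)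
      rwa [hTf, smul_smul, inv_mul_cancel₀ sqrt2_ne, one_smul] at this
    · intro j x hx
      have := Submodule.smul_mem _ ((Real.sqrt 2 : ℂ))⁻¹ (hcl _ (hbE j) x hx)
      rwa [hTb, smul_smul, inv_mul_cancel₀ sqrt2_ne, one_smul] at this
  have hEinv : ∀ g, IsSpinElt (2 * m + 1) (2 * m) g →
        ∀ x ∈ SpinorEven (2 * m + 1) m, τ g x ∈ SpinorEven (2 * m + 1) m := by
    intro g hg x hx
    rw [even_iff] at hx ⊢
    rw [hcomm g hg, hx]
  have hOinv : ∀ g, IsSpinElt (2 * m + 1) (2 * m) g →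
        ∀ x ∈ SpinorOdd (2 * m + 1) m, τ g x ∈ SpinorOdd (2 * m + 1) m := by
    intro g hg x hx
    rw [odd_iff] at hx ⊢
    rw [hcomm g hg, hx, map_neg]
  have hEirr : ∀ U : Submodule ℂ (Spinor (2 * m + 1) m), U ≤ SpinorEven (2 * m + 1) m →
        (∀ g, IsSpinElt (2 * m + 1) (2 * m) g → ∀ x ∈ U, τ g x ∈ U) →
        U = ⊥ ∨ U = SpinorEven (2 * m + 1) m := by
    intro U hle hU
    by_cases hne : U = ⊥
    · exact Or.inl hne
    refine Or.inr (le_antisymm hle fun x hx => ?_)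
    have hx' : x ∈ U ⊔ U.map T0 := hcore U hU hne ▸ Submodule.mem_top
    obtain ⟨y, hy, z, ⟨z, hz, rfl⟩, rfl⟩ := Submodule.mem_sup.1 hx'
    have h1 := (even_iff _ _ _).1 (hle hy)
    have h2 := (even_iff _ _ _).1 (hle hz)
    rw [even_iff, map_add, h1, hanti, h2] at hx
    have h3 : T0 z = 0 := c_self_neg (add_left_cancel hx).symm
    rw [h3, add_zero]; exact hy
  have hOirr : ∀ U : Submodule ℂ (Spinor (2 * m + 1) m), U ≤ SpinorOdd (2 * m + 1) m →
        (∀ g, IsSpinElt (2 * m + 1) (2 * m) g → ∀ x ∈ U, τ g x ∈ U) →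
        U = ⊥ ∨ U = SpinorOdd (2 * m + 1) m := by
    intro U hle hU
    by_cases hne : U = ⊥
    · exact Or.inl hne
    refine Or.inr (le_antisymm hle fun x hx => ?_)
    have hx' : x ∈ U ⊔ U.map T0 := hcore U hU hne ▸ Submodule.mem_top
    obtain ⟨y, hy, z, ⟨z, hz, rfl⟩, rfl⟩ := Submodule.mem_sup.1 hx'
    have h1 := (odd_iff _ _ _).1 (hle hy)
    have h2 := (odd_iff _ _ _).1 (hle hz)
    rw [odd_iff, map_add, h1, hanti, h2, map_neg, neg_neg, neg_add] at hx
    have h3 : T0 z = 0 := c_self_neg (add_left_cancel hx)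
    rw [h3, add_zero]; exact hy
  refine ⟨hEinv, hOinv, hEirr, hOirr, ?_, ?_⟩
  · rintro ⟨g, hg⟩
    have key : ∀ B ∈ 𝒜, ∀ x y : SpinorEven (2 * m + 1) m,
        (y : Spinor (2 * m + 1) m) = B (x : Spinor (2 * m + 1) m) →
          (g y : Spinor (2 * m + 1) m) = B (g x : Spinor (2 * m + 1) m) := by
      intro B hB
      induction hB using Algebra.adjoin_induction with
      | mem B hB => obtain ⟨a, ha, rfl⟩ := hB; exact hg a ha
      | algebraMap r =>
        intro x y hxy
        rw [Module.algebraMap_end_apply] at hxy ⊢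
        have : y = r • x := Subtype.ext hxy
        rw [this, map_smul]; rfl
      | add A B hA' hB' hA hB =>
        intro x y hxy
        have h1 := hA x ⟨_, hinv _ hEinv A hA' x x.2⟩ rfl
        have h2 := hB x ⟨_, hinv _ hEinv B hB' x x.2⟩ rfl
        rw [LinearMap.add_apply, ← h1, ← h2, ← Submodule.coe_add, ← map_add]
        congr 2
        exact Subtype.ext hxy
      | mul A B hA' hB' hA hB =>
        intro x y hxy
        have h2 := hB x ⟨_, hinv _ hEinv B hB' x x.2⟩ rfl
        have h1 := hA ⟨_, hinv _ hEinv B hB' x x.2⟩ y hxy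
        rw [h1, h2]; rfl
    have h1mem : (1 : Spinor (2 * m + 1) m) ∈ SpinorEven (2 * m + 1) m := by
      exact (even_iff _ _ _).2 (map_one (CliffordAlgebra.involute
        (Q := (0 : QuadraticForm ℂ (Wsub (2 * m + 1) m)))))
    have h1 := key _ hgam ⟨1, h1mem⟩ ⟨1, h1mem⟩ ((even_iff _ _ _).1 h1mem).symm
    rw [(odd_iff _ _ _).1 (g ⟨1, h1mem⟩).2] at h1
    have h2 : g ⟨1, h1mem⟩ = 0 := Subtype.ext (c_self_neg h1)
    have h3 := g.map_eq_zero_iff.1 h2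
    exact one_ne_zero (congrArg Subtype.val h3)
  · intro U hU
    have hsplit : U = (U ⊓ SpinorEven (2 * m + 1) m) ⊔ (U ⊓ SpinorOdd (2 * m + 1) m) := by
      refine le_antisymm (fun x hx => ?_) (sup_le inf_le_left inf_le_left)
      have hgx := hinv U hU _ hgam x hx
      have hpp : parity (2 * m + 1) m (parity (2 * m + 1) m x) = x :=
        CliffordAlgebra.involute_involute x
      have hx' : x = (1 / 2 : ℂ) • (x + parity (2 * m + 1) m x) +
          (1 / 2 : ℂ) • (x - parity (2 * m + 1) m x) := c_half _ _
      rw [hx']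
      refine Submodule.add_mem_sup ⟨U.smul_mem _ (U.add_mem hx hgx), ?_⟩
        ⟨U.smul_mem _ (U.sub_mem hx hgx), ?_⟩
      · refine (even_iff _ _ _).2 ?_
        rw [map_smul, map_add, hpp, add_comm x]
      · refine (odd_iff _ _ _).2 ?_
        rw [map_smul, map_sub, hpp, ← smul_neg, neg_sub]
    have hc : SpinorEven (2 * m + 1) m ⊔ SpinorOdd (2 * m + 1) m = ⊤ :=
      (CliffordAlgebra.evenOdd_isCompl
        (Q := (0 : QuadraticForm ℂ (Wsub (2 * m + 1) m)))).sup_eq_top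
    rcases hEirr _ inf_le_right (fun g hg x hx => ⟨hU g hg x hx.1, hEinv g hg x hx.2⟩)
      with h1 | h1 <;>
    rcases hOirr _ inf_le_right (fun g hg x hx => ⟨hU g hg x hx.1, hOinv g hg x hx.2⟩)
      with h2 | h2 <;> rw [h1, h2] at hsplit
    · left; simpa using hsplit
    · right; right; left; simpa using hsplit
    · right; left; simpa using hsplit
    · right; right; right; rw [hsplit, hc]
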